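/- Let r ≤ d, let f : ℝ^{d×r} → ℝ be differentiable with gradient ∇f (i.e., for every z, the Fréchet derivative of f at z is h ↦ ⟨∇f(z), h⟩), assume ∇f is L-Lipschitz on ℝ^{d×r} with respect to the Frobenius norm, and assume ‖∇f(z)‖₂ ≤ L_n for every z with zᵀz = I_r. For x with xᵀx = I_r define the Riemannian gradient grad f(x) := ∇f(x) − (1/2)x(xᵀ∇f(x) + ∇f(x)ᵀx). Then for all x, y with xᵀx = I_r and yᵀy = I_r: |f(y) − f(x) − ⟨grad f(x), y − x⟩| ≤ ((L + L_n)/2) ‖y − x‖_F². -/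

import Mathlib

open Matrix

attribute [local instance] Matrix.normedAddCommGroup Matrix.normedSpace

/-- Frobenius norm of a real matrix. -/
noncomputable def frobNorm {m n : ℕ} (A : Matrix (Fin m) (Fin n) ℝ) : ℝ :=
  Real.sqrt (∑ i, ∑ j, (A i j) ^ 2)

/-- Spectral (operator) norm of a real matrix. -/
noncomputable def specNorm {m n : ℕ} (A : Matrix (Fin m) (Fin n) ℝ) : ℝ :=
  ‖LinearMap.toContinuousLinearMap (Matrix.toEuclideanLin A)‖

/-- Frobenius inner product `⟨A, B⟩ = trace (AᵀB)` of real matrices. -/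
noncomputable def finner {m n : ℕ} (A B : Matrix (Fin m) (Fin n) ℝ) : ℝ :=
  (Aᵀ * B).trace

theorem finner_eq_sum {m n : ℕ} (A B : Matrix (Fin m) (Fin n) ℝ) :
    finner A B = ∑ i, ∑ j, A i j * B i j := by
  unfold finner
  simp only [Matrix.trace, Matrix.diag, Matrix.mul_apply, Matrix.transpose_apply]
  exact Finset.sum_comm

theorem finner_cs {m n : ℕ} (A B : Matrix (Fin m) (Fin n) ℝ) :
    |finner A B| ≤ frobNorm A * frobNorm B := by
  rw [finner_eq_sum]
  unfold frobNorm
  rw [← Real.sqrt_mul (by positivity)]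
  apply Real.abs_le_sqrt
  have := Finset.sum_mul_sq_le_sq_mul_sq (Finset.univ : Finset (Fin m × Fin n))
    (fun p => A p.1 p.2) (fun p => B p.1 p.2)
  simpa only [Fintype.sum_prod_type] using this

theorem frobNorm_sq {m n : ℕ} (A : Matrix (Fin m) (Fin n) ℝ) :
    frobNorm A ^ 2 = ∑ i, ∑ j, A i j ^ 2 := by
  unfold frobNorm
  rw [Real.sq_sqrt (by positivity)]

theorem frobNorm_smul {m n : ℕ} (t : ℝ) (ht : 0 ≤ t) (A : Matrix (Fin m) (Fin n) ℝ) :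
    frobNorm (t • A) = t * frobNorm A := by
  unfold frobNorm
  have : ∑ i, ∑ j, (t • A) i j ^ 2 = t ^ 2 * ∑ i, ∑ j, A i j ^ 2 := by
    simp only [Matrix.smul_apply, smul_eq_mul, mul_pow, Finset.mul_sum]
  rw [this, Real.sqrt_mul (by positivity), Real.sqrt_sq ht]

theorem descent_aux (g g' : ℝ → ℝ) (c K : ℝ) (hg : ∀ t, HasDerivAt g (g' t) t)
    (hK : ∀ t, 0 ≤ t → |g' t - c| ≤ K * t) : |g 1 - g 0 - c| ≤ K / 2 := by
  have h1 : ∀ t, HasDerivAt (fun t => g t - g 0 - c * t) (g' t - c) t := fun t => by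
    have h := ((hg t).sub_const (g 0)).sub ((hasDerivAt_id t).const_mul c)
    rw [mul_one] at h
    exact h
  have h2 : ∀ t, HasDerivAt (fun t : ℝ => K / 2 * t ^ 2) (K * t) t := fun t => by
    have := ((hasDerivAt_id t).pow 2).const_mul (K / 2)
    have e : K / 2 * (((2 : ℕ) : ℝ) * id t ^ (2 - 1) * 1) = K * t := by
      simp; ring
    rw [e] at this
    exact this
  have := image_norm_le_of_norm_deriv_right_le_deriv_boundary (a := (0:ℝ)) (b := 1)
    (f := fun t => g t - g 0 - c * t) (f' := fun t => g' t - c)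
    (B := fun t => K / 2 * t ^ 2) (B' := fun t => K * t)
    (fun t _ => (h1 t).continuousAt.continuousWithinAt)
    (fun t _ => (h1 t).hasDerivWithinAt) (by simp) h2
    (fun t ht => hK t ht.1) (x := 1) (by simp)
  simpa using this

theorem dot_bound {d r : ℕ} (G x : Matrix (Fin d) (Fin r) ℝ) (hx : xᵀ * x = 1) (v : Fin r → ℝ) :
    |(G *ᵥ v) ⬝ᵥ (x *ᵥ v)| ≤ specNorm G * (v ⬝ᵥ v) := by
  have hxv : (x *ᵥ v) ⬝ᵥ (x *ᵥ v) = v ⬝ᵥ v := by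
    rw [Matrix.dotProduct_mulVec, Matrix.vecMul_mulVec, ← Matrix.dotProduct_mulVec] <;> simp [hx]
  have e1 : ∀ {k : ℕ} (a : Fin k → ℝ), ‖WithLp.toLp 2 a‖ = Real.sqrt (a ⬝ᵥ a) := fun a => by
    rw [EuclideanSpace.norm_eq]; simp [dotProduct, sq]
  have h1 : ‖WithLp.toLp 2 (G *ᵥ v)‖ ≤ specNorm G * ‖WithLp.toLp 2 v‖ := by
    have := (LinearMap.toContinuousLinearMap (Matrix.toEuclideanLin G)).le_opNorm (WithLp.toLp 2 v)
    simpa [specNorm] using this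
  have h2 := abs_real_inner_le_norm (WithLp.toLp 2 (G *ᵥ v)) (WithLp.toLp 2 (x *ᵥ v))
  have h3 : inner ℝ (WithLp.toLp 2 (G *ᵥ v)) (WithLp.toLp 2 (x *ᵥ v)) = (G *ᵥ v) ⬝ᵥ (x *ᵥ v) := by
    simp [EuclideanSpace.inner_eq_star_dotProduct, dotProduct_comm]
  have h0 : 0 ≤ v ⬝ᵥ v := by
    simp only [dotProduct]; exact Finset.sum_nonneg fun i _ => mul_self_nonneg _
  rw [h3, e1 (x *ᵥ v), hxv] at h2
  rw [e1 v] at h1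
  refine h2.trans ((mul_le_mul_of_nonneg_right h1 (Real.sqrt_nonneg _)).trans ?_)
  rw [mul_assoc, Real.mul_self_sqrt h0]

theorem normal_part {d r : ℕ} (G x y : Matrix (Fin d) (Fin r) ℝ) (hx : xᵀ * x = 1)
    (hy : yᵀ * y = 1) :
    finner (x * (xᵀ * G + Gᵀ * x)) (y - x) = - finner (G * (y - x)ᵀ) (x * (y - x)ᵀ) := by
  have key : (y - x)ᵀ * (y - x) = - (xᵀ * (y - x) + (y - x)ᵀ * x) := by
    simp only [Matrix.transpose_sub, Matrix.sub_mul, Matrix.mul_sub, hx, hy]; abel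
  generalize y - x = D at key
  unfold finner
  have e1 : ((G * Dᵀ)ᵀ * (x * Dᵀ)).trace = (Gᵀ * x * (Dᵀ * D)).trace := by
    rw [Matrix.transpose_mul, Matrix.transpose_transpose, Matrix.mul_assoc, Matrix.trace_mul_comm]
    simp only [Matrix.mul_assoc]
  have e2 : (Gᵀ * x * (Dᵀ * x)).trace = (xᵀ * G * (xᵀ * D)).trace := by
    rw [← Matrix.trace_transpose, Matrix.trace_mul_comm]
    simp only [Matrix.transpose_mul, Matrix.transpose_transpose, Matrix.mul_assoc]
  rw [e1, key, Matrix.mul_neg, Matrix.trace_neg, neg_neg, Matrix.mul_add (Gᵀ * x),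
    Matrix.trace_add, e2]
  simp only [Matrix.transpose_mul, Matrix.transpose_add, Matrix.transpose_transpose,
    Matrix.add_mul, Matrix.trace_add, Matrix.mul_assoc]

theorem normal_bound {d r : ℕ} (G x D : Matrix (Fin d) (Fin r) ℝ) (hx : xᵀ * x = 1) :
    |finner (G * Dᵀ) (x * Dᵀ)| ≤ specNorm G * frobNorm D ^ 2 := by
  have : finner (G * Dᵀ) (x * Dᵀ) = ∑ k, (G *ᵥ D k) ⬝ᵥ (x *ᵥ D k) := by
    rw [finner_eq_sum, Finset.sum_comm]
    rfl
  rw [this, frobNorm_sq, Finset.mul_sum]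
  refine (Finset.abs_sum_le_sum_abs _ _).trans (Finset.sum_le_sum fun k _ => ?_)
  have := dot_bound G x hx (D k)
  simpa [dotProduct, sq] using this

/-- **Riemannian Lipschitz-type inequality on the Stiefel manifold (function values).**
If `f` is differentiable with gradient `Df` (so the Fréchet derivative at `z` is
`h ↦ ⟨Df z, h⟩`), `Df` is `L`-Lipschitz in Frobenius norm on `ℝ^{d×r}` and
`‖Df z‖₂ ≤ Ln` on `St(d,r)`, then with
`grad f x = Df x − (1/2)x(xᵀ Df x + (Df x)ᵀ x)` one has, for all `x, y ∈ St(d,r)`,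
`|f(y) − f(x) − ⟨grad f x, y − x⟩| ≤ ((L + Ln)/2)‖y − x‖_F²`. -/
theorem riemannian_lipschitz_function_values
    (d r : ℕ) (hdr : r ≤ d) (L Ln : ℝ)
    (f : Matrix (Fin d) (Fin r) ℝ → ℝ) (Df : Matrix (Fin d) (Fin r) ℝ → Matrix (Fin d) (Fin r) ℝ)
    (hdiff : Differentiable ℝ f)
    (hgrad : ∀ z h, fderiv ℝ f z h = finner (Df z) h)
    (hLip : ∀ a b, frobNorm (Df a - Df b) ≤ L * frobNorm (a - b))
    (hbound : ∀ z : Matrix (Fin d) (Fin r) ℝ, zᵀ * z = 1 → specNorm (Df z) ≤ Ln) :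
    ∀ x y : Matrix (Fin d) (Fin r) ℝ, xᵀ * x = 1 → yᵀ * y = 1 →
      |f y - f x -
          finner (Df x - (1 / 2 : ℝ) • (x * (xᵀ * Df x + (Df x)ᵀ * x))) (y - x)| ≤
        ((L + Ln) / 2) * (frobNorm (y - x)) ^ 2 := by
  intro x y hx hy
  have hdesc : |f y - f x - finner (Df x) (y - x)| ≤ L * frobNorm (y - x) ^ 2 / 2 := by
    have hg : ∀ t : ℝ, HasDerivAt (fun t : ℝ => f (x + t • (y - x)))
        (finner (Df (x + t • (y - x))) (y - x)) t := fun t => by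
      have h1 : HasDerivAt (fun t : ℝ => x + t • (y - x)) (y - x) t := by
        have h := ((hasDerivAt_id t).smul_const (y - x)).const_add x
        rw [one_smul] at h
        exact h
      rw [← hgrad]
      exact (hdiff _).hasFDerivAt.comp_hasDerivAt t h1
    have := descent_aux _ _ (finner (Df x) (y - x)) (L * frobNorm (y - x) ^ 2) hg
      (fun t ht => by
        have e : finner (Df (x + t • (y - x))) (y - x) - finner (Df x) (y - x)
            = finner (Df (x + t • (y - x)) - Df x) (y - x) := by
          simp [finner, Matrix.sub_mul]
        rw [e]
        refine (finner_cs _ _).trans ?_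
        have h := hLip (x + t • (y - x)) x
        rw [add_sub_cancel_left, frobNorm_smul t ht] at h
        have h0 : 0 ≤ frobNorm (y - x) := Real.sqrt_nonneg _
        have := mul_le_mul_of_nonneg_right h h0
        linarith)
    simpa using this
  have hn := normal_bound (Df x) x (y - x) hx
  have hb := mul_le_mul_of_nonneg_right (hbound x hx) (sq_nonneg (frobNorm (y - x)))
  have e : finner (Df x - (1 / 2 : ℝ) • (x * (xᵀ * Df x + (Df x)ᵀ * x))) (y - x)
      = finner (Df x) (y - x) - (1 / 2) * finner (x * (xᵀ * Df x + (Df x)ᵀ * x)) (y - x) := by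
    simp only [finner, Matrix.transpose_sub, Matrix.transpose_smul, Matrix.sub_mul,
      Matrix.smul_mul, Matrix.trace_sub, Matrix.trace_smul, smul_eq_mul]
  rw [e, normal_part (Df x) x y hx hy]
  rw [abs_le] at *
  constructor <;> linarith [hdesc.1, hdesc.2, hn.1, hn.2]
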